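/- Let Y be a CAT(0) space. Then every bounded sequence in Y admits a subsequence which converges weakly to some point of Y. -/

import Mathlib

open Filter MeasureTheory Set Bornology
open scoped ENNReal Topology NNReal

/-- A (constant-speed, minimizing) geodesic defined on `[0,1]`:
`d(γ_s, γ_t) = |s - t| * d(γ_0, γ_1)` for all `s, t ∈ [0,1]`. -/
def IsGeodesic {Y : Type*} [MetricSpace Y] (γ : ℝ → Y) : Prop :=
  ∀ s ∈ Set.Icc (0:ℝ) 1, ∀ t ∈ Set.Icc (0:ℝ) 1,
    dist (γ s) (γ t) = |s - t| * dist (γ 0) (γ 1)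

/-- A metric space is geodesic if every two points are joined by a geodesic. -/
def GeodesicSpace (Y : Type*) [MetricSpace Y] : Prop :=
  ∀ x y : Y, ∃ γ : ℝ → Y, IsGeodesic γ ∧ γ 0 = x ∧ γ 1 = y

/-- The CAT(0) condition: geodesic space satisfying the comparison inequality
`d²(γ_t, a) ≤ (1-t)·d²(γ_0, a) + t·d²(γ_1, a) − t(1-t)·d²(γ_0, γ_1)`.
(Completeness is required separately as a typeclass assumption.) -/
def Cat0 (Y : Type*) [MetricSpace Y] : Prop :=
  GeodesicSpace Y ∧
    ∀ γ : ℝ → Y, IsGeodesic γ → ∀ a : Y, ∀ t ∈ Set.Icc (0:ℝ) 1,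
      dist (γ t) a ^ 2 ≤ (1 - t) * dist (γ 0) a ^ 2 + t * dist (γ 1) a ^ 2
        - t * (1 - t) * dist (γ 0) (γ 1) ^ 2

/-- A subset is geodesically convex if every geodesic joining two of its points
lies entirely inside it. -/
def GeodesicConvex {Y : Type*} [MetricSpace Y] (C : Set Y) : Prop :=
  ∀ γ : ℝ → Y, IsGeodesic γ → γ 0 ∈ C → γ 1 ∈ C → ∀ t ∈ Set.Icc (0:ℝ) 1, γ t ∈ C

/-- `lam`-convexity along geodesics of an extended-real-valued functional:
`E(γ_t) ≤ (1-t)E(γ_0) + tE(γ_1) − (lam/2)t(1−t)d²(γ_0,γ_1)`. -/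
def LamConvex {Y : Type*} [MetricSpace Y] (lam : ℝ) (E : Y → EReal) : Prop :=
  ∀ γ : ℝ → Y, IsGeodesic γ → ∀ t ∈ Set.Icc (0:ℝ) 1,
    E (γ t) ≤ ((1 - t : ℝ) : EReal) * E (γ 0) + ((t : ℝ) : EReal) * E (γ 1)
      - ((lam / 2 * t * (1 - t) * dist (γ 0) (γ 1) ^ 2 : ℝ) : EReal)

/-- The descending slope `|∂⁻E|(y) = limsup_{z→y} (E(y)−E(z))⁺ / d(y,z)`,
set to `∞` outside the domain `{E < ∞}` of `E`. -/
noncomputable def descendingSlope {Y : Type*} [MetricSpace Y] (E : Y → EReal) (y : Y) :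
    ℝ≥0∞ :=
  if E y = ⊤ then ⊤
  else Filter.limsup (fun z => ENNReal.ofReal ((E y - E z).toReal / dist y z))
      (nhdsWithin y {y}ᶜ)

/-- `ω(y; (y_n)) := limsup_n d(y, y_n)²`. -/
noncomputable def asymptoticRadius {Y : Type*} [MetricSpace Y] (yn : ℕ → Y) (y : Y) : ℝ :=
  Filter.limsup (fun n => dist y (yn n) ^ 2) Filter.atTop

/-- Weak convergence of a bounded sequence: `y` is an asymptotic center
(i.e. a minimizer of `ω(·; ·)`) of every subsequence. -/
def WeakConv {Y : Type*} [MetricSpace Y] (yn : ℕ → Y) (y : Y) : Prop :=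
  Bornology.IsBounded (Set.range yn) ∧
    ∀ φ : ℕ → ℕ, StrictMono φ →
      ∀ z : Y, asymptoticRadius (yn ∘ φ) y ≤ asymptoticRadius (yn ∘ φ) z

/-- Absolute continuity on a set `I ⊆ ℝ`: there is a nonnegative integrable `g`
with `d(y_s, y_t) ≤ ∫_s^t g` for `s ≤ t` in `I`. -/
def AbsContOnSet {Y : Type*} [MetricSpace Y] (y : ℝ → Y) (I : Set ℝ) : Prop :=
  ∃ g : ℝ → ℝ, (∀ t, 0 ≤ g t) ∧ MeasureTheory.IntegrableOn g I ∧
    ∀ s ∈ I, ∀ t ∈ I, s ≤ t → dist (y s) (y t) ≤ ∫ r in s..t, g r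

/-- Absolute continuity on the interval `[a,b]`. -/
def AbsContOn {Y : Type*} [MetricSpace Y] (y : ℝ → Y) (a b : ℝ) : Prop :=
  AbsContOnSet y (Set.Icc a b)

/-- Local absolute continuity on `(0,∞)`. -/
def LocAbsCont {Y : Type*} [MetricSpace Y] (y : ℝ → Y) : Prop :=
  ∀ a b : ℝ, 0 < a → a ≤ b → AbsContOn y a b

/-- The Evolution Variational Inequality: for every `z`, for a.e. `t > 0` the
derivative of `t ↦ ½ d²(y_t, z)` exists and
`(d/dt)(½d²(y_t,z)) + E(y_t) + (lam/2)d²(y_t,z) ≤ E(z)`. -/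
def EVI {Y : Type*} [MetricSpace Y] (lam : ℝ) (E : Y → EReal) (y : ℝ → Y) : Prop :=
  ∀ z : Y, ∀ᵐ t ∂(MeasureTheory.volume.restrict (Set.Ioi (0:ℝ))),
    ∃ d' : ℝ, HasDerivAt (fun s => dist (y s) z ^ 2 / 2) d' t ∧
      (d' : EReal) + E (y t) + ((lam / 2 * dist (y t) z ^ 2 : ℝ) : EReal) ≤ E z

/-- A gradient flow trajectory for `E` starting from `y₀`: a locally absolutely
continuous curve on `(0,∞)` converging to `y₀` at `0` and satisfying the EVI. -/
def GradientFlow {Y : Type*} [MetricSpace Y] (lam : ℝ) (E : Y → EReal) (y₀ : Y)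
    (y : ℝ → Y) : Prop :=
  LocAbsCont y ∧ Filter.Tendsto y (nhdsWithin 0 (Set.Ioi 0)) (nhds y₀) ∧ EVI lam E y

/-!
The functional `y ↦ limsup d²(y, ·)` along a bounded filter is strongly convex along geodesics of a
CAT(0) space, so in a complete space it attains its infimum, at an asymptotic center of the filter.
That infimum decreases as the filter is refined. Repeatedly choosing a nearly optimal refinement
yields a countably generated filter of indices below `atTop` all of whose countably generated
refinements have the same infimum; an asymptotic center of this filter is one of each such
refinement, hence of every subsequence of a sequence of indices converging to the filter.
-/

section OrderingPrinciple

variable {α : Type*} [Preorder α] {f : α → ℝ}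

theorem exists_le_forall_le_lt_add (hf : BddBelow (range f)) (a : α) {ε : ℝ} (hε : 0 < ε) :
    ∃ b ≤ a, ∀ c ≤ b, f b < f c + ε := by
  obtain ⟨_, ⟨b, hba, rfl⟩, hb⟩ := exists_lt_of_csInf_lt (s := f '' Iic a)
    (nonempty_Iic.image f) (lt_add_of_pos_right _ hε)
  refine ⟨b, hba, fun c hcb => hb.trans_le ?_⟩
  gcongr
  exact csInf_le (hf.mono (image_subset_range f _)) ⟨c, hcb.trans hba, rfl⟩

/-- The Brezis–Browder ordering principle. -/
theorem exists_le_forall_le_eq_of_monotone (hmono : Monotone f) (hf : BddBelow (range f))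
    (hα : ∀ s : ℕ → α, Antitone s → BddBelow (range s)) (a : α) :
    ∃ b ≤ a, ∀ c ≤ b, f c = f b := by
  choose next next_le lt_add using fun (n : ℕ) a =>
    exists_le_forall_le_lt_add hf a (Nat.one_div_pos_of_nat (α := ℝ) (n := n))
  let s : ℕ → α := fun n => Nat.rec a next n
  obtain ⟨b, hb⟩ := hα s (antitone_nat_of_succ_le fun n => next_le n (s n))
  have hbs (n : ℕ) : b ≤ s n := hb (mem_range_self n)
  refine ⟨b, hbs 0, fun c hcb => (hmono hcb).antisymm ?_⟩
  have hlim : Tendsto (fun n : ℕ => f c + 1 / ((n : ℝ) + 1)) atTop (𝓝 (f c)) := by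
    simpa using tendsto_one_div_add_atTop_nhds_zero_nat.const_add (f c)
  refine ge_of_tendsto' hlim fun n => ?_
  calc f b ≤ f (s (n + 1)) := hmono (hbs (n + 1))
    _ ≤ f c + 1 / ((n : ℝ) + 1) := (lt_add n (s n) c (hcb.trans (hbs (n + 1)))).le

end OrderingPrinciple

section CountablyGeneratedFilter

/-- Proper countably generated filters, ordered by refinement. On `ℕ`, those below `atTop` play the
role of subsequences, with the advantage that decreasing sequences have lower bounds. -/
abbrev CountablyGeneratedFilter (α : Type*) : Type _ :=
  {L : Filter α // L.NeBot ∧ L.IsCountablyGenerated}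

theorem bddBelow_range_of_antitone_countablyGeneratedFilter {α : Type*}
    {s : ℕ → CountablyGeneratedFilter α} (hs : Antitone s) : BddBelow (range s) := by
  have hne (n : ℕ) : (s n).1.NeBot := (s n).2.1
  have hcg (n : ℕ) : (s n).1.IsCountablyGenerated := (s n).2.2
  have hdir : Directed (· ≥ ·) fun n => (s n).1 :=
    (show Antitone fun n => (s n).1 from hs).directed_ge
  exact ⟨⟨⨅ n, (s n).1, iInf_neBot_of_directed' hdir hne, inferInstance⟩,
    forall_mem_range.2 (iInf_le fun n => (s n).1)⟩

theorem exists_strictMono_tendsto_of_le_atTop {L : Filter ℕ} [L.NeBot] [L.IsCountablyGenerated]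
    (hL : L ≤ atTop) : ∃ φ : ℕ → ℕ, StrictMono φ ∧ Tendsto φ atTop L := by
  obtain ⟨u, hu⟩ := exists_seq_tendsto L
  obtain ⟨ψ, hψ, huψ⟩ := strictMono_subseq_of_tendsto_atTop (hu.mono_right hL)
  exact ⟨u ∘ ψ, huψ, hu.comp hψ.tendsto_atTop⟩

end CountablyGeneratedFilter

theorem exists_forall_le_of_lowerSemicontinuous_of_midpoint_le {X : Type*} [PseudoMetricSpace X]
    [CompleteSpace X] [Nonempty X] {f : X → ℝ} (hf : LowerSemicontinuous f)
    (hbdd : BddBelow (range f)) {k : ℝ} (hk : 0 < k)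
    (hmid : ∀ x y, ∃ m, f m ≤ (f x + f y) / 2 - k * dist x y ^ 2) :
    ∃ x, ∀ y, f x ≤ f y := by
  set r := ⨅ x, f x
  have hr (x : X) : r ≤ f x := ciInf_le hbdd x
  let minimizing : Filter X := comap f (𝓝 r)
  have hmin : Tendsto f minimizing (𝓝 r) := tendsto_comap
  have hne : minimizing.NeBot := comap_neBot_iff_frequently.2 <|
    mem_closure_iff_frequently.1 <| csInf_mem_closure (range_nonempty f) hbdd
  have hcauchy : Cauchy minimizing := by
    refine Metric.cauchy_iff.2 ⟨hne, fun ε hε => ?_⟩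
    have hpos : 0 < k * ε ^ 2 := by positivity
    refine ⟨_, hmin.eventually_lt_const (lt_add_of_pos_right r hpos),
      fun x (hx : f x < r + k * ε ^ 2) y (hy : f y < r + k * ε ^ 2) => ?_⟩
    obtain ⟨m, hm⟩ := hmid x y
    have hsq : k * dist x y ^ 2 < k * ε ^ 2 := by linarith [hr m]
    exact lt_of_pow_lt_pow_left₀ 2 hε.le (lt_of_mul_lt_mul_left hsq hk.le)
  obtain ⟨x, hx⟩ := CompleteSpace.complete hcauchy
  have hxr : f x ≤ r := le_of_forall_lt_imp_le_of_dense fun a ha =>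
    ge_of_tendsto hmin (((hf x a ha).filter_mono hx).mono fun _ => le_of_lt)
  exact ⟨x, fun y => hxr.trans (hr y)⟩

section LimsupSqDist

/-- The functional `y ↦ limsup d²(y, ·)` along a filter `F` on the space. For the filter
`map yn atTop` of a sequence this is `asymptoticRadius yn`, definitionally. -/
noncomputable def limsupSqDist {X : Type*} [PseudoMetricSpace X] (F : Filter X) (y : X) : ℝ :=
  limsup (fun z => dist y z ^ 2) F

/-- The infimum of `limsupSqDist F`. For the filter of a bounded sequence it is the square of
what is usually called the asymptotic radius of the sequence. -/
noncomputable def infLimsupSqDist {X : Type*} [PseudoMetricSpace X] (F : Filter X) : ℝ :=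
  ⨅ y, limsupSqDist F y

/-- Asymptotic centers of a filter, i.e. minimizers of `limsupSqDist F`. For the filter
`map yn atTop` these are the asymptotic centers of the sequence `yn`. -/
def IsAsymptoticCenter {X : Type*} [PseudoMetricSpace X] (F : Filter X) (c : X) : Prop :=
  ∀ y, limsupSqDist F c ≤ limsupSqDist F y

variable {X : Type*} [PseudoMetricSpace X] {F G : Filter X}

theorem exists_eventually_dist_le (hF : Disjoint F (cobounded X)) (y : X) :
    ∃ C, ∀ᶠ z in F, dist y z ≤ C := by
  obtain ⟨s, hsF, hs⟩ := hF.exists_isBounded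
  obtain ⟨C, hC⟩ := hs.subset_closedBall y
  exact ⟨C, mem_of_superset hsF fun z hz => (dist_comm y z).trans_le (hC hz)⟩

theorem isBoundedUnder_sq_dist (hF : Disjoint F (cobounded X)) (y : X) :
    F.IsBoundedUnder (· ≤ ·) fun z => dist y z ^ 2 := by
  obtain ⟨C, hC⟩ := exists_eventually_dist_le hF y
  exact isBoundedUnder_of_eventually_le (hC.mono fun _ hz => pow_le_pow_left₀ dist_nonneg hz 2)

theorem isCoboundedUnder_sq_dist (F : Filter X) [F.NeBot] (y : X) :
    F.IsCoboundedUnder (· ≤ ·) fun z => dist y z ^ 2 :=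
  isCoboundedUnder_le_of_le F fun _ => sq_nonneg _

theorem limsupSqDist_le [F.NeBot] {y : X} {a : ℝ} (h : ∀ᶠ z in F, dist y z ^ 2 ≤ a) :
    limsupSqDist F y ≤ a :=
  limsup_le_of_le (isCoboundedUnder_sq_dist F y) h

theorem eventually_sq_dist_lt_limsupSqDist_add (hF : Disjoint F (cobounded X)) (y : X) {ε : ℝ}
    (hε : 0 < ε) : ∀ᶠ z in F, dist y z ^ 2 < limsupSqDist F y + ε :=
  eventually_lt_of_limsup_lt (lt_add_of_pos_right _ hε) (isBoundedUnder_sq_dist hF y)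

theorem limsupSqDist_nonneg [F.NeBot] (hF : Disjoint F (cobounded X)) (y : X) :
    0 ≤ limsupSqDist F y :=
  le_limsup_of_frequently_le (Frequently.of_forall fun _ => sq_nonneg _)
    (isBoundedUnder_sq_dist hF y)

theorem limsupSqDist_mono [F.NeBot] (hG : Disjoint G (cobounded X)) (hFG : F ≤ G) (y : X) :
    limsupSqDist F y ≤ limsupSqDist G y :=
  limsup_le_limsup_of_le hFG (isCoboundedUnder_sq_dist F y) (isBoundedUnder_sq_dist hG y)

theorem bddBelow_range_limsupSqDist [F.NeBot] (hF : Disjoint F (cobounded X)) :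
    BddBelow (range (limsupSqDist F)) :=
  ⟨0, forall_mem_range.2 (limsupSqDist_nonneg hF)⟩

theorem infLimsupSqDist_nonneg [F.NeBot] (hF : Disjoint F (cobounded X)) :
    0 ≤ infLimsupSqDist F :=
  Real.iInf_nonneg (limsupSqDist_nonneg hF)

theorem infLimsupSqDist_mono [F.NeBot] (hG : Disjoint G (cobounded X)) (hFG : F ≤ G) :
    infLimsupSqDist F ≤ infLimsupSqDist G :=
  ciInf_mono (bddBelow_range_limsupSqDist (hG.mono_left hFG)) (limsupSqDist_mono hG hFG)

theorem IsAsymptoticCenter.of_le {c : X} (hc : IsAsymptoticCenter G c) [F.NeBot]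
    (hG : Disjoint G (cobounded X)) (hFG : F ≤ G) (h : infLimsupSqDist G ≤ infLimsupSqDist F) :
    IsAsymptoticCenter F c := fun y =>
  have : Nonempty X := ⟨c⟩
  calc limsupSqDist F c ≤ limsupSqDist G c := limsupSqDist_mono hG hFG c
    _ ≤ infLimsupSqDist G := le_ciInf hc
    _ ≤ infLimsupSqDist F := h
    _ ≤ limsupSqDist F y := ciInf_le (bddBelow_range_limsupSqDist (hG.mono_left hFG)) y

theorem sq_dist_le_sq_dist_add (x y z : X) :
    dist x z ^ 2 ≤ dist y z ^ 2 + dist x y * (2 * dist x z + dist x y) := by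
  have hsub : dist x z - dist y z ≤ dist x y := sub_le_iff_le_add.2 (dist_triangle x y z)
  have hsum : dist x z + dist y z ≤ 2 * dist x z + dist x y := by
    linarith [dist_triangle_left y z x]
  calc dist x z ^ 2
      = dist y z ^ 2 + (dist x z - dist y z) * (dist x z + dist y z) := by ring
    _ ≤ dist y z ^ 2 + dist x y * (2 * dist x z + dist x y) :=
      add_le_add_right (mul_le_mul hsub hsum (by positivity) dist_nonneg) _

theorem limsupSqDist_le_limsupSqDist_add [F.NeBot] (hF : Disjoint F (cobounded X)) {x : X} {C : ℝ}
    (hC : ∀ᶠ z in F, dist x z ≤ C) (y : X) :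
    limsupSqDist F x ≤ limsupSqDist F y + dist x y * (2 * C + dist x y) := by
  refine le_of_forall_pos_le_add fun ε hε => limsupSqDist_le ?_
  filter_upwards [hC, eventually_sq_dist_lt_limsupSqDist_add hF y hε] with z hxz hyz
  calc dist x z ^ 2 ≤ dist y z ^ 2 + dist x y * (2 * dist x z + dist x y) :=
        sq_dist_le_sq_dist_add x y z
    _ ≤ (limsupSqDist F y + ε) + dist x y * (2 * C + dist x y) := by gcongr
    _ = limsupSqDist F y + dist x y * (2 * C + dist x y) + ε := by ring

theorem lowerSemicontinuous_limsupSqDist [F.NeBot] (hF : Disjoint F (cobounded X)) :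
    LowerSemicontinuous (limsupSqDist F) := by
  intro x a ha
  obtain ⟨C, hC⟩ := exists_eventually_dist_le hF x
  have hcont : Continuous fun y => limsupSqDist F x - dist x y * (2 * C + dist x y) := by fun_prop
  filter_upwards [hcont.tendsto' x (limsupSqDist F x) (by simp) |>.eventually_const_lt ha] with y hy
  linarith [limsupSqDist_le_limsupSqDist_add hF hC y]

end LimsupSqDist

namespace Cat0

variable {Y : Type*} [MetricSpace Y] {F : Filter Y} [F.NeBot]

theorem limsupSqDist_geodesic_le (hY : Cat0 Y) (hF : Disjoint F (cobounded Y)) {γ : ℝ → Y}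
    (hγ : IsGeodesic γ) {t : ℝ} (ht : t ∈ Icc (0 : ℝ) 1) :
    limsupSqDist F (γ t) ≤ (1 - t) * limsupSqDist F (γ 0) + t * limsupSqDist F (γ 1)
      - t * (1 - t) * dist (γ 0) (γ 1) ^ 2 := by
  refine le_of_forall_pos_le_add fun ε hε => limsupSqDist_le ?_
  filter_upwards [eventually_sq_dist_lt_limsupSqDist_add hF (γ 0) hε,
    eventually_sq_dist_lt_limsupSqDist_add hF (γ 1) hε] with z hz₀ hz₁
  have ht₀ : 0 ≤ t := ht.1
  have ht₁ : 0 ≤ 1 - t := sub_nonneg.2 ht.2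
  calc dist (γ t) z ^ 2
      ≤ (1 - t) * dist (γ 0) z ^ 2 + t * dist (γ 1) z ^ 2
          - t * (1 - t) * dist (γ 0) (γ 1) ^ 2 := hY.2 γ hγ z t ht
    _ ≤ (1 - t) * (limsupSqDist F (γ 0) + ε) + t * (limsupSqDist F (γ 1) + ε)
          - t * (1 - t) * dist (γ 0) (γ 1) ^ 2 := by gcongr
    _ = (1 - t) * limsupSqDist F (γ 0) + t * limsupSqDist F (γ 1)
          - t * (1 - t) * dist (γ 0) (γ 1) ^ 2 + ε := by ring

theorem exists_isAsymptoticCenter [CompleteSpace Y] (hY : Cat0 Y)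
    (hF : Disjoint F (cobounded Y)) : ∃ c, IsAsymptoticCenter F c := by
  have : Nonempty Y := F.nonempty_of_neBot
  refine exists_forall_le_of_lowerSemicontinuous_of_midpoint_le
    (lowerSemicontinuous_limsupSqDist hF) (bddBelow_range_limsupSqDist hF) (k := 1 / 4)
    (by norm_num) fun x y => ?_
  obtain ⟨γ, hγ, rfl, rfl⟩ := hY.1 x y
  refine ⟨γ (1 / 2), (hY.limsupSqDist_geodesic_le hF hγ (by norm_num)).trans_eq ?_⟩
  ring

end Cat0

/-- **Weak sequential compactness of bounded sequences in a CAT(0) space**: every bounded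
sequence admits a weakly converging subsequence. -/
theorem bounded_exists_weakConv_subseq {Y : Type*} [MetricSpace Y] [CompleteSpace Y]
    (hY : Cat0 Y) (yn : ℕ → Y) (hbd : Bornology.IsBounded (Set.range yn)) :
    ∃ φ : ℕ → ℕ, StrictMono φ ∧ ∃ y : Y, WeakConv (yn ∘ φ) y := by
  have hyn (L : Filter ℕ) : Disjoint (map yn L) (cobounded Y) :=
    hbd.disjoint_cobounded range_mem_map
  have hne (L : CountablyGeneratedFilter ℕ) : L.1.NeBot := L.2.1
  have hmono : Monotone fun L : CountablyGeneratedFilter ℕ => infLimsupSqDist (map yn L.1) :=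
    fun _ L hL => infLimsupSqDist_mono (hyn L.1) (map_mono hL)
  obtain ⟨⟨L, _, _⟩, hL, hconst⟩ := exists_le_forall_le_eq_of_monotone hmono
    ⟨0, forall_mem_range.2 fun L => infLimsupSqDist_nonneg (hyn L.1)⟩
    (fun _ => bddBelow_range_of_antitone_countablyGeneratedFilter)
    ⟨atTop, inferInstance, inferInstance⟩
  obtain ⟨φ, hφ, hφL⟩ := exists_strictMono_tendsto_of_le_atTop hL
  obtain ⟨c, hc⟩ := hY.exists_isAsymptoticCenter (hyn L)
  refine ⟨φ, hφ, c, hbd.subset (range_comp_subset_range φ yn), fun ψ hψ => ?_⟩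
  have hle : map (φ ∘ ψ) atTop ≤ L := hφL.comp hψ.tendsto_atTop
  exact hc.of_le (hyn L) (map_mono hle)
    (hconst ⟨map (φ ∘ ψ) atTop, inferInstance, inferInstance⟩ hle).ge
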